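/- Let f : C_p → C_p be locally analytic on C_p. Then for every x ∈ C_p, the limit F(x) := lim_{n→∞} (1/p^n) ∑_{j=0}^{p^n - 1} f(x+j) exists (the Volkenborn integral of t ↦ f(x+t)). -/

import Mathlib

open Filter

/-!
Only strict differentiability of `f` along `x + ℤ_p` matters. Writing an integer below `p ^ (n + 1)`
as `j + p ^ n * i` with `j < p ^ n` and `i < p`, consecutive Volkenborn sums differ by
`p ^ (-n - 1) * ∑ j, ∑ i, (f (x + j + p ^ n * i) - f (x + j))`. Replacing each difference by
`p ^ n * i * f' (x + j)` costs an error that tends to zero, because strict differentiability is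
uniform on the compact set `x + ℤ_p` and ultrametric sums are no larger than their largest term.
What is left is a constant times `∑ j < p ^ n, f' (x + j)`, which tends to zero since `f'` is
uniformly continuous and each of its values is repeated, approximately, a large power of `p` times.
In an ultrametric group, successive differences tending to zero make a sequence Cauchy.
-/

open scoped Topology

section StrictDerivative

variable {𝕜 E F : Type*} [NontriviallyNormedField 𝕜] [NormedAddCommGroup E] [NormedSpace 𝕜 E]
  [NormedAddCommGroup F] [NormedSpace 𝕜 F] {f : E → F} {f' : E → E →L[𝕜] F} {s : Set E}

theorem continuousOn_of_forall_hasStrictFDerivAt (hf : ∀ a ∈ s, HasStrictFDerivAt f (f' a) a) :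
    ContinuousOn f' s := by
  intro a ha
  refine Metric.nhds_basis_closedBall.tendsto_right_iff.2 fun ε hε => ?_
  have near_a : ∀ᶠ z in 𝓝 a, ∀ᶠ y in 𝓝 z, ‖f y - f z - f' a (y - z)‖ ≤ ε * ‖y - z‖ := by
    have diag : Continuous fun z : E => (z, z) := by fun_prop
    filter_upwards [(diag.tendsto a).eventually ((hf a ha).isLittleO.def hε).eventually_nhds]
      with z hz
    exact (Continuous.prodMk_left z).continuousAt.eventually hz
  filter_upwards [near_a.filter_mono nhdsWithin_le_nhds, self_mem_nhdsWithin] with z hz hzs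
  rw [mem_closedBall_iff_norm]
  refine ((hf z hzs).hasFDerivAt.sub (f' a).hasFDerivAt).le_of_lip' hε.le ?_
  filter_upwards [hz] with y hy
  simpa [sub_sub_sub_comm] using hy

theorem eventually_forall_norm_sub_sub_le_of_hasStrictFDerivAt (hs : IsCompact s)
    (hf : ∀ a ∈ s, HasStrictFDerivAt f (f' a) a) {ε : ℝ} (hε : 0 < ε) :
    ∀ᶠ h in 𝓝 0, ∀ a ∈ s, ‖f (a + h) - f a - f' a h‖ ≤ ε * ‖h‖ := by
  -- The compactness principle lets the base point range over a full neighborhood of `a`, so the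
  -- membership in `s` has to be part of the predicate.
  suffices ∀ᶠ h in 𝓝 (0 : E), ∀ a ∈ s, a ∈ s → ‖f (a + h) - f a - f' a h‖ ≤ ε * ‖h‖ by
    filter_upwards [this] with h hh a ha using hh a ha ha
  refine hs.eventually_forall_of_forall_eventually fun a ha => ?_
  have shift : Tendsto (fun z : E × E => (z.2 + z.1, z.2)) (𝓝 (0, a)) (𝓝 (a, a)) := by
    have : Continuous fun z : E × E => (z.2 + z.1, z.2) := by fun_prop
    simpa using this.tendsto (0, a)
  have strict_a := shift.eventually ((hf a ha).isLittleO.def (half_pos hε))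
  have deriv_near : ∀ᶠ z : E × E in 𝓝 (0, a), z.2 ∈ s → ‖f' z.2 - f' a‖ ≤ ε / 2 := by
    have h := Metric.nhds_basis_closedBall.tendsto_right_iff.1
      (continuousOn_of_forall_hasStrictFDerivAt hf a ha) _ (half_pos hε)
    simp only [mem_closedBall_iff_norm] at h
    exact (continuous_snd.tendsto (0, a)).eventually (eventually_nhdsWithin_iff.1 h)
  filter_upwards [strict_a, deriv_near] with ⟨h, y⟩ hstrict hnear hy
  simp only [add_sub_cancel_left] at hstrict
  calc ‖f (y + h) - f y - f' y h‖
      = ‖f (y + h) - f y - f' a h - (f' y - f' a) h‖ := by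
        rw [sub_apply, sub_sub_sub_cancel_right]
    _ ≤ ε / 2 * ‖h‖ + ε / 2 * ‖h‖ :=
        (norm_sub_le _ _).trans <| add_le_add hstrict <|
          (f' y - f' a).le_of_opNorm_le (hnear hy) h
    _ = ε * ‖h‖ := by ring

end StrictDerivative

section BlockSums

variable {R : Type*} [Semiring R]

theorem sum_range_mul_eq_sum_sum {M : Type*} [AddCommMonoid M] (g : R → M) (m k : ℕ) :
    ∑ l ∈ Finset.range (m * k), g l
      = ∑ j ∈ Finset.range m, ∑ i ∈ Finset.range k, g (j + m * i) := by
  rw [Finset.sum_comm]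
  induction k with
  | zero => simp
  | succ k ih =>
    rw [Nat.mul_succ, Finset.sum_range_add, ih, Finset.sum_range_succ]
    simp [add_comm]

theorem sum_range_mul_sub_nsmul_sum {M : Type*} [AddCommGroup M] (g : R → M) (m k : ℕ) :
    ∑ l ∈ Finset.range (m * k), g l - k • ∑ j ∈ Finset.range m, g j
      = ∑ j ∈ Finset.range m, ∑ i ∈ Finset.range k, (g (j + m * i) - g j) := by
  simp only [sum_range_mul_eq_sum_sum, Finset.sum_sub_distrib, Finset.sum_const,
    Finset.card_range, Finset.smul_sum]

end BlockSums

section VolkenbornSum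

variable {p : ℕ} [Fact p.Prime] {M : Type*} [AddCommGroup M] [Module ℚ_[p] M]

/-- The normalized sums `p ^ (-n) * ∑ j < p ^ n, g j` whose limit is the Volkenborn integral of
`g`, with values in any vector space over `ℚ_[p]`. -/
noncomputable def volkenbornSum (g : ℤ_[p] → M) (n : ℕ) : M :=
  ((p : ℚ_[p]) ^ n)⁻¹ • ∑ j ∈ Finset.range (p ^ n), g j

theorem volkenbornSum_succ_sub (g g' : ℤ_[p] → M) (n : ℕ) :
    volkenbornSum g (n + 1) - volkenbornSum g n
      = ((p : ℚ_[p])⁻¹ * ∑ i ∈ Finset.range p, (i : ℚ_[p])) • ∑ j ∈ Finset.range (p ^ n), g' j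
        + ((p : ℚ_[p]) ^ (n + 1))⁻¹ • ∑ j ∈ Finset.range (p ^ n), ∑ i ∈ Finset.range p,
          (g (j + p ^ n * i) - g j - ((p : ℚ_[p]) ^ n * i) • g' j) := by
  have hp : (p : ℚ_[p]) ≠ 0 := Nat.cast_ne_zero.2 (Fact.out : p.Prime).ne_zero
  have difference : volkenbornSum g (n + 1) - volkenbornSum g n
      = ((p : ℚ_[p]) ^ (n + 1))⁻¹ • ∑ j ∈ Finset.range (p ^ n), ∑ i ∈ Finset.range p,
          (g (j + p ^ n * i) - g j) := by
    have h := sum_range_mul_sub_nsmul_sum g (p ^ n) p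
    push_cast at h
    rw [← h, volkenbornSum, volkenbornSum, smul_sub, ← Nat.cast_smul_eq_nsmul ℚ_[p], smul_smul,
      pow_succ p]
    congr 3
    rw [pow_succ, mul_inv_rev, mul_assoc]
    field_simp
  have linear_part : ∑ j ∈ Finset.range (p ^ n), ∑ i ∈ Finset.range p,
      ((p : ℚ_[p]) ^ n * i) • g' j
      = ((p : ℚ_[p]) ^ n * ∑ i ∈ Finset.range p, (i : ℚ_[p])) •
          ∑ j ∈ Finset.range (p ^ n), g' j := by
    rw [Finset.mul_sum, Finset.sum_smul_sum, Finset.sum_comm]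
  simp only [difference, Finset.sum_sub_distrib, linear_part, smul_sub, smul_smul]
  rw [add_sub_left_comm, left_eq_add, sub_eq_zero]
  congr 1
  rw [pow_succ]
  field_simp

end VolkenbornSum

theorem norm_sum_sum_le_of_isUltrametricDist {ι κ E : Type*} [SeminormedAddCommGroup E]
    [IsUltrametricDist E] {s : Finset ι} {t : Finset κ} {f : ι → κ → E} {C : ℝ} (hC : 0 ≤ C)
    (hf : ∀ i ∈ s, ∀ j ∈ t, ‖f i j‖ ≤ C) : ‖∑ i ∈ s, ∑ j ∈ t, f i j‖ ≤ C :=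
  IsUltrametricDist.norm_sum_le_of_forall_le_of_nonneg hC fun i hi =>
    IsUltrametricDist.norm_sum_le_of_forall_le_of_nonneg hC (hf i hi)

section PadicInt

variable {p : ℕ} [Fact p.Prime]

theorem eventually_forall_padicInt_pow_mul {P : ℤ_[p] → Prop} (hP : ∀ᶠ h in 𝓝 0, P h) :
    ∀ᶠ n : ℕ in atTop, ∀ u : ℤ_[p], P (p ^ n * u) := by
  obtain ⟨δ, hδ, hball⟩ := Metric.eventually_nhds_iff_ball.1 hP
  have pow_small : ∀ᶠ n : ℕ in atTop, ‖(p : ℤ_[p])‖ ^ n < δ :=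
    (tendsto_pow_atTop_nhds_zero_of_lt_one (norm_nonneg _)
      (PadicInt.norm_lt_one_iff_dvd _ |>.2 dvd_rfl)).eventually_lt_const hδ
  filter_upwards [pow_small] with n hn u
  refine hball _ (mem_ball_zero_iff.2 (lt_of_le_of_lt ?_ hn))
  rw [norm_mul, norm_pow]
  exact mul_le_of_le_one_right (by positivity) u.norm_le_one

theorem eventually_forall_norm_add_pow_mul_sub_le {E : Type*} [SeminormedAddCommGroup E]
    {g : ℤ_[p] → E} (hg : Continuous g) {ε : ℝ} (hε : 0 < ε) :
    ∀ᶠ n : ℕ in atTop, ∀ u t : ℤ_[p], ‖g (t + p ^ n * u) - g t‖ ≤ ε := by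
  refine eventually_forall_padicInt_pow_mul (P := fun h => ∀ t, ‖g (t + h) - g t‖ ≤ ε) ?_
  have uniform : UniformContinuous g := CompactSpace.uniformContinuous_of_continuous hg
  obtain ⟨δ, hδ, hdist⟩ := Metric.uniformContinuous_iff.1 uniform ε hε
  filter_upwards [Metric.ball_mem_nhds 0 hδ] with h hh t
  rw [← dist_eq_norm]
  exact (hdist (by simpa using hh)).le

theorem tendsto_sum_range_pow_nhds_zero {E : Type*} [SeminormedAddCommGroup E]
    [NormedSpace ℚ_[p] E] [IsUltrametricDist E] {g : ℤ_[p] → E} (hg : Continuous g) :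
    Tendsto (fun n : ℕ => ∑ j ∈ Finset.range (p ^ n), g j) atTop (𝓝 0) := by
  refine Metric.nhds_basis_closedBall.tendsto_right_iff.2 fun ε hε => ?_
  obtain ⟨N, hN⟩ := (eventually_forall_norm_add_pow_mul_sub_le hg hε).exists
  have main_small : ∀ᶠ k : ℕ in atTop,
      ‖(p : ℚ_[p]) ^ k • ∑ j ∈ Finset.range (p ^ N), g j‖ ≤ ε := by
    have pow_tendsto : Tendsto (fun k : ℕ => (p : ℚ_[p]) ^ k) atTop (𝓝 0) :=
      tendsto_pow_atTop_nhds_zero_of_norm_lt_one Padic.norm_p_lt_one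
    have h := (pow_tendsto.smul_const (∑ j ∈ Finset.range (p ^ N), g (j : ℤ_[p]))).norm
    rw [zero_smul, norm_zero] at h
    exact h.eventually_le_const hε
  rw [← map_add_atTop_eq_nat N, eventually_map]
  filter_upwards [main_small] with k hk
  have block_error : ‖∑ l ∈ Finset.range (p ^ N * p ^ k), g l
      - p ^ k • ∑ j ∈ Finset.range (p ^ N), g j‖ ≤ ε := by
    rw [sum_range_mul_sub_nsmul_sum]
    exact norm_sum_sum_le_of_isUltrametricDist hε.le fun j _ i _ => by exact_mod_cast hN i j
  rw [mem_closedBall_zero_iff, add_comm, pow_add, ← sub_add_cancel (∑ l ∈ _, _)]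
  refine (IsUltrametricDist.norm_add_le_max _ _).trans (max_le block_error ?_)
  rwa [← Nat.cast_smul_eq_nsmul ℚ_[p], Nat.cast_pow]

variable {E : Type*} [NormedAddCommGroup E] [NormedSpace ℚ_[p] E]
  {f : ℚ_[p] → E} {f' : ℤ_[p] → E}

theorem hasStrictFDerivAt_fderiv_of_mem_range_padicInt
    (hf : ∀ t : ℤ_[p], HasStrictDerivAt f (f' t) t) :
    ∀ a ∈ Set.range fun t : ℤ_[p] => (t : ℚ_[p]), HasStrictFDerivAt f (fderiv ℚ_[p] f a) a := by
  rintro _ ⟨t, rfl⟩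
  have h := (hf t).hasStrictFDerivAt
  rwa [h.hasFDerivAt.fderiv]

theorem continuous_of_forall_hasStrictDerivAt_padicInt
    (hf : ∀ t : ℤ_[p], HasStrictDerivAt f (f' t) t) : Continuous f' := by
  have fderiv_comp_coe : Continuous fun t : ℤ_[p] => fderiv ℚ_[p] f t :=
    (continuousOn_of_forall_hasStrictFDerivAt
      (hasStrictFDerivAt_fderiv_of_mem_range_padicInt hf)).comp_continuous
      continuous_subtype_val Set.mem_range_self
  have h := fderiv_comp_coe.clm_apply (continuous_const (y := (1 : ℚ_[p])))
  simpa [(hf _).hasDerivAt.deriv] using h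

theorem eventually_forall_norm_sub_sub_pow_mul_smul_le
    (hf : ∀ t : ℤ_[p], HasStrictDerivAt f (f' t) t) {ε : ℝ} (hε : 0 < ε) :
    ∀ᶠ n : ℕ in atTop, ∀ u t : ℤ_[p],
      ‖f (t + p ^ n * u) - f t - ((p : ℚ_[p]) ^ n * u) • f' t‖ ≤ ε * ‖(p : ℚ_[p])‖ ^ n := by
  have strict_near_zero := eventually_forall_norm_sub_sub_le_of_hasStrictFDerivAt
    (isCompact_range (X := ℤ_[p]) continuous_subtype_val)
    (hasStrictFDerivAt_fderiv_of_mem_range_padicInt hf) hε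
  have coe_tendsto : Tendsto (fun h : ℤ_[p] => (h : ℚ_[p])) (𝓝 0) (𝓝 0) :=
    continuous_subtype_val.tendsto' _ _ PadicInt.coe_zero
  filter_upwards [eventually_forall_padicInt_pow_mul (coe_tendsto.eventually strict_near_zero)]
    with n hn u t
  have h := Set.forall_mem_range.1 (hn u) t
  rw [fderiv_eq_smul_deriv, (hf t).hasDerivAt.deriv, PadicInt.coe_mul, PadicInt.coe_pow,
    PadicInt.coe_natCast] at h
  refine h.trans (mul_le_mul_of_nonneg_left ?_ hε.le)
  rw [norm_mul, norm_pow]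
  exact mul_le_of_le_one_right (by positivity) u.norm_le_one

variable [IsUltrametricDist E]

theorem tendsto_volkenbornSum_succ_sub_nhds_zero
    (hf : ∀ t : ℤ_[p], HasStrictDerivAt f (f' t) t) :
    Tendsto (fun n => volkenbornSum (fun t : ℤ_[p] => f t) (n + 1)
      - volkenbornSum (fun t : ℤ_[p] => f t) n) atTop (𝓝 0) := by
  have hp : 0 < ‖(p : ℚ_[p])‖ := by
    simpa using (Fact.out : p.Prime).pos
  have linear_part := (tendsto_sum_range_pow_nhds_zero
    (continuous_of_forall_hasStrictDerivAt_padicInt hf)).const_smul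
      ((p : ℚ_[p])⁻¹ * ∑ i ∈ Finset.range p, (i : ℚ_[p]))
  simp only [volkenbornSum_succ_sub _ f']
  rw [← add_zero (0 : E)]
  refine (by simpa only [smul_zero] using linear_part : Tendsto _ _ (𝓝 (0 : E))).add ?_
  refine Metric.nhds_basis_closedBall.tendsto_right_iff.2 fun ε hε => ?_
  filter_upwards [eventually_forall_norm_sub_sub_pow_mul_smul_le hf (mul_pos hε hp)] with n hn
  rw [mem_closedBall_zero_iff, norm_smul, norm_inv, norm_pow, inv_mul_le_iff₀ (by positivity),
    pow_succ', mul_comm, ← mul_assoc]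
  exact norm_sum_sum_le_of_isUltrametricDist (by positivity) fun j _ i _ => by simpa using hn i j

theorem exists_tendsto_volkenbornSum [CompleteSpace E]
    (hf : ∀ t : ℤ_[p], HasStrictDerivAt f (f' t) t) :
    ∃ L, Tendsto (volkenbornSum fun t : ℤ_[p] => f t) atTop (𝓝 L) :=
  cauchySeq_tendsto_of_complete <|
    NonarchimedeanAddGroup.cauchySeq_of_tendsto_sub_nhds_zero <|
      tendsto_volkenbornSum_succ_sub_nhds_zero hf

end PadicInt

theorem volkenborn_integral_exists_general {p : ℕ} [Fact p.Prime] {K E : Type*}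
    [NontriviallyNormedField K] [NormedAlgebra ℚ_[p] K] [NormedAddCommGroup E] [NormedSpace K E]
    [IsUltrametricDist E] [CompleteSpace E] {f : K → E} {f' : ℤ_[p] → E} {x : K}
    (hf : ∀ t : ℤ_[p], HasStrictDerivAt f (f' t) (x + algebraMap ℚ_[p] K t)) :
    ∃ L : E,
      Tendsto (fun n : ℕ => ((p : K) ^ n)⁻¹ • ∑ j ∈ Finset.range (p ^ n), f (x + (j : K)))
        atTop (𝓝 L) := by
  let _ : NormedSpace ℚ_[p] E := NormedSpace.restrictScalars ℚ_[p] K E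
  have _ : IsScalarTower ℚ_[p] K E := .of_algebraMap_smul fun _ _ => rfl
  have translate_strict (t : ℤ_[p]) :
      HasStrictDerivAt (fun q : ℚ_[p] => f (x + algebraMap ℚ_[p] K q)) (f' t) t := by
    simpa [Function.comp_def] using
      (hf t).scomp (t : ℚ_[p]) ((algebraMapCLM ℚ_[p] K).hasStrictDerivAt.const_add x)
  obtain ⟨L, hL⟩ := exists_tendsto_volkenbornSum translate_strict
  refine ⟨L, hL.congr fun n => ?_⟩
  simp [volkenbornSum, ← algebraMap_smul K]

/-- For a locally analytic function `f : ℂ_p → ℂ_p`, the Volkenborn integral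
`lim_{n→∞} p^{-n} ∑_{j<p^n} f(x+j)` exists for every `x`.  Here `ℂ_p` is modelled
by a complete algebraically closed nonarchimedean field `K` containing `ℚ_[p]`
isometrically, and "locally analytic" means analytic at every point. -/
theorem volkenborn_integral_exists (p : ℕ) [Fact p.Prime] (K : Type*)
    [NontriviallyNormedField K] [CompleteSpace K] [IsAlgClosed K] [IsUltrametricDist K]
    [Algebra ℚ_[p] K] (hiso : ∀ q : ℚ_[p], ‖algebraMap ℚ_[p] K q‖ = ‖q‖)
    (f : K → K) (hf : ∀ a : K, AnalyticAt K f a) (x : K) :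
    ∃ L : K,
      Tendsto (fun n : ℕ => ((p : K) ^ n)⁻¹ * ∑ j ∈ Finset.range (p ^ n), f (x + (j : K)))
        atTop (nhds L) := by
  let _ : NormedAlgebra ℚ_[p] K :=
    { norm_smul_le := fun q y => by rw [Algebra.smul_def, norm_mul, hiso] }
  exact volkenborn_integral_exists_general (p := p) fun _ => (hf _).hasStrictDerivAt
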